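/- arXiv:2410.22695 — 6 statements merged into one kernel-verified Lean document; each statement's English description precedes it below -/
import Mathlib

section
/- For any p̂ ∈ Ω and losses L₁, L₂ (with the relevant Bayes updates well defined), the particle-filter outputs after applying the two losses in either order satisfy D(p̂[L₁, L₂], p̂[L₂, L₁]) ≤ 2ε · (C² − 1)/(C − 1). -/
open MeasureTheory

/-- The exact Bayes update of a Borel measure `p` on `ℝ^d` by a loss `L`:
the measure with density `x ↦ e^{-L x} / ∫ e^{-L x'} dp(x')` with respect to `p`
(defined when `∫ e^{-L} dp > 0`). -/
noncomputable def bayesUpdate {d : ℕ} (p : Measure (EuclideanSpace ℝ (Fin d)))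
    (L : EuclideanSpace ℝ (Fin d) → ℝ) : Measure (EuclideanSpace ℝ (Fin d)) :=
  p.withDensity fun x =>
    ENNReal.ofReal (Real.exp (-(L x)) / ∫ x', Real.exp (-(L x')) ∂p)

lemma aux_integrable {d : ℕ} (p : Measure (EuclideanSpace ℝ (Fin d))) [IsProbabilityMeasure p]
    (L : EuclideanSpace ℝ (Fin d) → ℝ) (hm : Measurable L) (h0 : ∀ x, 0 ≤ L x) :
    Integrable (fun x => Real.exp (-(L x))) p := by
  refine Integrable.of_bound (C := 1) (by fun_prop) (Filter.Eventually.of_forall fun x => ?_)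
  rw [Real.norm_eq_abs, abs_of_pos (Real.exp_pos _)]
  exact Real.exp_le_one_iff.2 (by linarith [h0 x])

lemma aux_prob {d : ℕ} (p : Measure (EuclideanSpace ℝ (Fin d))) (hp : IsProbabilityMeasure p)
    (L : EuclideanSpace ℝ (Fin d) → ℝ) (hm : Measurable L) (h0 : ∀ x, 0 ≤ L x)
    (hpos : 0 < ∫ x, Real.exp (-(L x)) ∂p) : IsProbabilityMeasure (bayesUpdate p L) := by
  constructor
  unfold bayesUpdate
  rw [withDensity_apply _ MeasurableSet.univ, Measure.restrict_univ,
    ← ofReal_integral_eq_lintegral_ofReal ((aux_integrable p L hm h0).div_const _)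
      (Filter.Eventually.of_forall fun x => div_nonneg (Real.exp_pos _).le hpos.le),
    integral_div, div_self hpos.ne', ENNReal.ofReal_one]

lemma aux_comp {d : ℕ} (p : Measure (EuclideanSpace ℝ (Fin d)))
    (L M : EuclideanSpace ℝ (Fin d) → ℝ) (hm : Measurable L) (hm' : Measurable M)
    (hpos : 0 < ∫ x, Real.exp (-(L x)) ∂p) :
    bayesUpdate (bayesUpdate p L) M = bayesUpdate p (fun x => L x + M x) := by
  have hZ : ∫ x, Real.exp (-(M x)) ∂(bayesUpdate p L)
      = (∫ x, Real.exp (-(L x + M x)) ∂p) / ∫ x, Real.exp (-(L x)) ∂p := by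
    unfold bayesUpdate
    rw [integral_withDensity_eq_integral_toReal_smul (by fun_prop)
      (Filter.Eventually.of_forall fun x => ENNReal.ofReal_lt_top), ← integral_div]
    congr 1
    ext x
    rw [ENNReal.toReal_ofReal (div_nonneg (Real.exp_pos _).le hpos.le), neg_add, Real.exp_add,
      smul_eq_mul]
    ring
  rw [bayesUpdate, hZ, bayesUpdate, bayesUpdate, ← withDensity_mul _ (by fun_prop) (by fun_prop)]
  congr 1
  ext x
  rw [Pi.mul_apply, ← ENNReal.ofReal_mul (div_nonneg (Real.exp_pos _).le hpos.le), neg_add,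
    Real.exp_add]
  congr 1
  generalize (∫ x, Real.exp (-(L x + M x)) ∂p) = W
  have := hpos.ne'
  rw [div_div_eq_mul_div]
  field_simp

/-- Applying two particle-filter updates in either order gives nearly the same output:
`D(p̂[L₁,L₂], p̂[L₂,L₁]) ≤ 2ε·(C² − 1)/(C − 1)`. -/
theorem particleFilter_two_losses_swap
    {d : ℕ}
    -- discrepancy measure `D` on the space `Ω` of Borel probability measures on `ℝ^d`
    (D : Measure (EuclideanSpace ℝ (Fin d)) → Measure (EuclideanSpace ℝ (Fin d)) → ℝ)
    (hD_nonneg : ∀ p q, IsProbabilityMeasure p → IsProbabilityMeasure q → 0 ≤ D p q)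
    (hD_symm : ∀ p q, IsProbabilityMeasure p → IsProbabilityMeasure q → D p q = D q p)
    (hD_tri : ∀ p q r, IsProbabilityMeasure p → IsProbabilityMeasure q →
      IsProbabilityMeasure r → D p q ≤ D p r + D r q)
    (hD_refl : ∀ p, IsProbabilityMeasure p → D p p = 0)
    -- particle-filter update `U`, sending `phat ∈ Ω` and a loss `L` to `U phat L ∈ Ω`
    (U : Measure (EuclideanSpace ℝ (Fin d)) → (EuclideanSpace ℝ (Fin d) → ℝ) →
      Measure (EuclideanSpace ℝ (Fin d)))
    (hU_prob : ∀ p L, IsProbabilityMeasure p → Measurable L → (∀ x, 0 ≤ L x) →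
      IsProbabilityMeasure (U p L))
    -- constants
    (C ε : ℝ) (hC : 1 < C) (hε : 0 ≤ ε)
    -- assumption (6)
    (h6 : ∀ p q L, IsProbabilityMeasure p → IsProbabilityMeasure q → Measurable L →
      (∀ x, 0 ≤ L x) → D (U p L) (U q L) ≤ C * D p q)
    -- assumption (7)
    (h7 : ∀ phat p L, IsProbabilityMeasure phat → IsProbabilityMeasure p → Measurable L →
      (∀ x, 0 ≤ L x) → 0 < ∫ x, Real.exp (-(L x)) ∂p →
      D (U phat L) (bayesUpdate p L) ≤ C * D phat p + ε)
    -- a probability measure and two losses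
    (phat : Measure (EuclideanSpace ℝ (Fin d))) (hphat : IsProbabilityMeasure phat)
    (L₁ L₂ : EuclideanSpace ℝ (Fin d) → ℝ)
    (hmeas₁ : Measurable L₁) (hmeas₂ : Measurable L₂)
    (hnonneg₁ : ∀ x, 0 ≤ L₁ x) (hnonneg₂ : ∀ x, 0 ≤ L₂ x)
    -- the relevant Bayes updates are well defined
    (hwd₁ : ∀ q : Measure (EuclideanSpace ℝ (Fin d)), IsProbabilityMeasure q →
      0 < ∫ x, Real.exp (-(L₁ x)) ∂q)
    (hwd₂ : ∀ q : Measure (EuclideanSpace ℝ (Fin d)), IsProbabilityMeasure q →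
      0 < ∫ x, Real.exp (-(L₂ x)) ∂q) :
    D (U (U phat L₁) L₂) (U (U phat L₂) L₁) ≤ 2 * ε * (C ^ 2 - 1) / (C - 1) := by
  have key : ∀ L M : EuclideanSpace ℝ (Fin d) → ℝ, Measurable L → Measurable M →
      (∀ x, 0 ≤ L x) → (∀ x, 0 ≤ M x) →
      (∀ q : Measure (EuclideanSpace ℝ (Fin d)), IsProbabilityMeasure q →
        0 < ∫ x, Real.exp (-(L x)) ∂q) →
      (∀ q : Measure (EuclideanSpace ℝ (Fin d)), IsProbabilityMeasure q →
        0 < ∫ x, Real.exp (-(M x)) ∂q) →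
      D (U (U phat L) M) (bayesUpdate (bayesUpdate phat L) M) ≤ C * ε + ε := by
    intro L M hL hM hL0 hM0 hLp hMp
    have hB := aux_prob phat hphat L hL hL0 (hLp _ hphat)
    have h1 := h7 phat phat L hphat hphat hL hL0 (hLp _ hphat)
    rw [hD_refl phat hphat] at h1
    have h2 := h7 (U phat L) _ M (hU_prob _ _ hphat hL hL0) hB hM hM0 (hMp _ hB)
    nlinarith
  have hB1 := aux_prob phat hphat L₁ hmeas₁ hnonneg₁ (hwd₁ _ hphat)
  have hB12 := aux_prob _ hB1 L₂ hmeas₂ hnonneg₂ (hwd₂ _ hB1)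
  have k1 := key L₁ L₂ hmeas₁ hmeas₂ hnonneg₁ hnonneg₂ hwd₁ hwd₂
  have k2 := key L₂ L₁ hmeas₂ hmeas₁ hnonneg₂ hnonneg₁ hwd₂ hwd₁
  have hc : bayesUpdate (bayesUpdate phat L₂) L₁ = bayesUpdate (bayesUpdate phat L₁) L₂ := by
    rw [aux_comp _ _ _ hmeas₂ hmeas₁ (hwd₂ _ hphat), aux_comp _ _ _ hmeas₁ hmeas₂ (hwd₁ _ hphat)]
    simp only [add_comm]
  rw [hc] at k2
  have hU1 := hU_prob _ _ (hU_prob _ _ hphat hmeas₁ hnonneg₁) hmeas₂ hnonneg₂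
  have hU2 := hU_prob _ _ (hU_prob _ _ hphat hmeas₂ hnonneg₂) hmeas₁ hnonneg₁
  rw [hD_symm _ _ hU2 hB12] at k2
  have ht := hD_tri _ _ _ hU1 hU2 hB12
  have he : 2 * ε * (C ^ 2 - 1) / (C - 1) = 2 * (C * ε + ε) := by
    rw [div_eq_iff (by linarith)]
    ring
  rw [he]
  linarith
end

section
/- For any p̂ ∈ Ω, losses L₁, L₂ and k further losses L₃, …, L_{2+k} (with the relevant Bayes updates well defined), swapping the first two losses and then applying the remaining k updates satisfies D(p̂[L₁, L₂, L₃, …, L_{2+k}], p̂[L₂, L₁, L₃, …, L_{2+k}]) ≤ 2ε · C^k · (C² − 1)/(C − 1). -/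
open MeasureTheory

theorem bayes_int {d : ℕ} (p : Measure (EuclideanSpace ℝ (Fin d))) (hp : IsProbabilityMeasure p)
    (L : EuclideanSpace ℝ (Fin d) → ℝ) (hm : Measurable L) (h0 : ∀ x, 0 ≤ L x) :
    Integrable (fun x => Real.exp ((fun x => -(L x)) x)) p := by
  refine Integrable.of_bound (C := 1) (by fun_prop) (Filter.Eventually.of_forall fun x => ?_)
  rw [Real.norm_eq_abs, abs_of_pos (Real.exp_pos _), Real.exp_le_one_iff]
  have := h0 x
  simpa using this

theorem bayes_tilted {d : ℕ} (p : Measure (EuclideanSpace ℝ (Fin d)))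
    (L : EuclideanSpace ℝ (Fin d) → ℝ) : bayesUpdate p L = p.tilted (fun x => -(L x)) := rfl

theorem foldl_bound {d : ℕ}
    (D : Measure (EuclideanSpace ℝ (Fin d)) → Measure (EuclideanSpace ℝ (Fin d)) → ℝ)
    (U : Measure (EuclideanSpace ℝ (Fin d)) → (EuclideanSpace ℝ (Fin d) → ℝ) →
      Measure (EuclideanSpace ℝ (Fin d)))
    (hU_prob : ∀ p L, IsProbabilityMeasure p → Measurable L → (∀ x, 0 ≤ L x) →
      IsProbabilityMeasure (U p L))
    (C : ℝ) (hC : 1 < C)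
    (h6 : ∀ p q L, IsProbabilityMeasure p → IsProbabilityMeasure q → Measurable L →
      (∀ x, 0 ≤ L x) → D (U p L) (U q L) ≤ C * D p q)
    (l : List (EuclideanSpace ℝ (Fin d) → ℝ)) :
    ∀ p q, IsProbabilityMeasure p → IsProbabilityMeasure q →
      (∀ L ∈ l, Measurable L ∧ ∀ x, 0 ≤ L x) →
      D (List.foldl U p l) (List.foldl U q l) ≤ C ^ l.length * D p q := by
  induction l with
  | nil => intro p q _ _ _; simp
  | cons L l ih =>
    intro p q hp hq hl
    obtain ⟨hm, h0⟩ := hl L (by simp)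
    have h := ih (U p L) (U q L) (hU_prob p L hp hm h0) (hU_prob q L hq hm h0)
      (fun M hM => hl M (by simp [hM]))
    have h2 := mul_le_mul_of_nonneg_left (h6 p q L hp hq hm h0)
      (pow_nonneg (by linarith : (0:ℝ) ≤ C) l.length)
    simp only [List.foldl_cons, List.length_cons, pow_succ]
    linarith

/-- Swapping the first two losses and then applying `k` further particle-filter updates:
`D(p̂[L₁,L₂,L₃,…,L_{2+k}], p̂[L₂,L₁,L₃,…,L_{2+k}]) ≤ 2ε·C^k·(C² − 1)/(C − 1)`. -/
theorem particleFilter_swap_then_further_updates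
    {d : ℕ}
    -- discrepancy measure `D` on the space `Ω` of Borel probability measures on `ℝ^d`
    (D : Measure (EuclideanSpace ℝ (Fin d)) → Measure (EuclideanSpace ℝ (Fin d)) → ℝ)
    (hD_nonneg : ∀ p q, IsProbabilityMeasure p → IsProbabilityMeasure q → 0 ≤ D p q)
    (hD_symm : ∀ p q, IsProbabilityMeasure p → IsProbabilityMeasure q → D p q = D q p)
    (hD_tri : ∀ p q r, IsProbabilityMeasure p → IsProbabilityMeasure q →
      IsProbabilityMeasure r → D p q ≤ D p r + D r q)
    (hD_refl : ∀ p, IsProbabilityMeasure p → D p p = 0)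
    -- particle-filter update `U`, sending `phat ∈ Ω` and a loss `L` to `U phat L ∈ Ω`
    (U : Measure (EuclideanSpace ℝ (Fin d)) → (EuclideanSpace ℝ (Fin d) → ℝ) →
      Measure (EuclideanSpace ℝ (Fin d)))
    (hU_prob : ∀ p L, IsProbabilityMeasure p → Measurable L → (∀ x, 0 ≤ L x) →
      IsProbabilityMeasure (U p L))
    -- constants
    (C ε : ℝ) (hC : 1 < C) (hε : 0 ≤ ε)
    -- assumption (6)
    (h6 : ∀ p q L, IsProbabilityMeasure p → IsProbabilityMeasure q → Measurable L →
      (∀ x, 0 ≤ L x) → D (U p L) (U q L) ≤ C * D p q)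
    -- assumption (7)
    (h7 : ∀ phat p L, IsProbabilityMeasure phat → IsProbabilityMeasure p → Measurable L →
      (∀ x, 0 ≤ L x) → 0 < ∫ x, Real.exp (-(L x)) ∂p →
      D (U phat L) (bayesUpdate p L) ≤ C * D phat p + ε)
    -- a probability measure, two losses, and `k` further losses
    (phat : Measure (EuclideanSpace ℝ (Fin d))) (hphat : IsProbabilityMeasure phat)
    (L₁ L₂ : EuclideanSpace ℝ (Fin d) → ℝ)
    (hmeas₁ : Measurable L₁) (hmeas₂ : Measurable L₂)
    (hnonneg₁ : ∀ x, 0 ≤ L₁ x) (hnonneg₂ : ∀ x, 0 ≤ L₂ x)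
    {k : ℕ} (L' : Fin k → EuclideanSpace ℝ (Fin d) → ℝ)
    (hmeas' : ∀ t, Measurable (L' t)) (hnonneg' : ∀ t x, 0 ≤ L' t x)
    -- the relevant Bayes updates are well defined
    (hwd₁ : ∀ q : Measure (EuclideanSpace ℝ (Fin d)), IsProbabilityMeasure q →
      0 < ∫ x, Real.exp (-(L₁ x)) ∂q)
    (hwd₂ : ∀ q : Measure (EuclideanSpace ℝ (Fin d)), IsProbabilityMeasure q →
      0 < ∫ x, Real.exp (-(L₂ x)) ∂q)
    (hwd' : ∀ t : Fin k, ∀ q : Measure (EuclideanSpace ℝ (Fin d)), IsProbabilityMeasure q →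
      0 < ∫ x, Real.exp (-(L' t x)) ∂q) :
    D (List.foldl U (U (U phat L₁) L₂) (List.ofFn L'))
        (List.foldl U (U (U phat L₂) L₁) (List.ofFn L')) ≤
      2 * ε * C ^ k * (C ^ 2 - 1) / (C - 1) := by
  have P1 := hU_prob _ L₁ hphat hmeas₁ hnonneg₁
  have P2 := hU_prob _ L₂ hphat hmeas₂ hnonneg₂
  have P12 := hU_prob _ L₂ P1 hmeas₂ hnonneg₂
  have P21 := hU_prob _ L₁ P2 hmeas₁ hnonneg₁
  have I1 := bayes_int phat hphat L₁ hmeas₁ hnonneg₁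
  have I2 := bayes_int phat hphat L₂ hmeas₂ hnonneg₂
  have B1 : IsProbabilityMeasure (bayesUpdate phat L₁) := isProbabilityMeasure_tilted I1
  have B2 : IsProbabilityMeasure (bayesUpdate phat L₂) := isProbabilityMeasure_tilted I2
  have B12 : IsProbabilityMeasure (bayesUpdate (bayesUpdate phat L₁) L₂) :=
    isProbabilityMeasure_tilted (bayes_int _ B1 L₂ hmeas₂ hnonneg₂)
  have E : bayesUpdate (bayesUpdate phat L₂) L₁ = bayesUpdate (bayesUpdate phat L₁) L₂ := by
    simp only [bayes_tilted]
    rw [tilted_tilted I1, tilted_tilted I2, add_comm]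
  have a1 := h7 phat phat L₁ hphat hphat hmeas₁ hnonneg₁ (hwd₁ _ hphat)
  have a2 := h7 phat phat L₂ hphat hphat hmeas₂ hnonneg₂ (hwd₂ _ hphat)
  have b1 := h7 _ _ L₂ P1 B1 hmeas₂ hnonneg₂ (hwd₂ _ B1)
  have b2 := h7 _ _ L₁ P2 B2 hmeas₁ hnonneg₁ (hwd₁ _ B2)
  rw [E] at b2
  rw [hD_refl _ hphat] at a1 a2
  have t := hD_tri _ _ _ P12 P21 B12
  rw [hD_symm _ _ B12 P21] at t
  have hC0 : (0:ℝ) ≤ C := by linarith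
  have c1 := mul_le_mul_of_nonneg_left a1 hC0
  have c2 := mul_le_mul_of_nonneg_left a2 hC0
  have key : D (U (U phat L₁) L₂) (U (U phat L₂) L₁) ≤ 2 * ε * (C + 1) := by linarith
  have F := foldl_bound D U hU_prob C hC h6 (List.ofFn L') _ _ P12 P21 (by
    intro L hL
    obtain ⟨t, rfl⟩ := (List.mem_ofFn' _ _).1 hL
    exact ⟨hmeas' t, hnonneg' t⟩)
  rw [List.length_ofFn] at F
  have G := mul_le_mul_of_nonneg_left key (pow_nonneg hC0 k)
  have H : 2 * ε * C ^ k * (C ^ 2 - 1) / (C - 1) = C ^ k * (2 * ε * (C + 1)) := by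
    have : C - 1 ≠ 0 := sub_ne_zero.2 hC.ne'
    rw [div_eq_iff this]
    ring
  rw [H]
  exact F.trans G
end

section
/- Let T ≥ 2, let p̂ ∈ Ω and let L₁, …, L_T be losses (with the relevant Bayes updates well defined). For any index 1 ≤ i ≤ T−1, swapping the two adjacent losses L_i and L_{i+1} changes the particle-filter output by at most: D(p̂[L₁, …, L_{i−1}, L_i, L_{i+1}, L_{i+2}, …, L_T], p̂[L₁, …, L_{i−1}, L_{i+1}, L_i, L_{i+2}, …, L_T]) ≤ 2ε · C^{T−2} · (C² − 1)/(C − 1). -/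
open MeasureTheory

theorem bayesUpdate_prob {d : ℕ} (p : Measure (EuclideanSpace ℝ (Fin d)))
    (hp : IsProbabilityMeasure p) (L : EuclideanSpace ℝ (Fin d) → ℝ)
    (hL : Measurable L) (hn : ∀ x, 0 ≤ L x) (hZ : 0 < ∫ x, Real.exp (-(L x)) ∂p) :
    IsProbabilityMeasure (bayesUpdate p L) := by
  have hint : Integrable (fun x => Real.exp (-(L x))) p := by
    refine Integrable.of_bound (by fun_prop) 1 (Filter.Eventually.of_forall fun x => ?_)
    rw [Real.norm_eq_abs, abs_of_pos (Real.exp_pos _)]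
    simpa using hn x
  constructor
  unfold bayesUpdate
  rw [withDensity_apply _ MeasurableSet.univ, Measure.restrict_univ,
    ← ofReal_integral_eq_lintegral_ofReal (hint.div_const _)
      (Filter.Eventually.of_forall fun x => by positivity),
    integral_div, div_self hZ.ne', ENNReal.ofReal_one]

theorem bayesUpdate_bayesUpdate {d : ℕ} (p : Measure (EuclideanSpace ℝ (Fin d)))
    (L M : EuclideanSpace ℝ (Fin d) → ℝ)
    (hL : Measurable L) (hM : Measurable M) (hZ : 0 < ∫ x, Real.exp (-(L x)) ∂p) :
    bayesUpdate (bayesUpdate p L) M = p.withDensity fun x =>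
      ENNReal.ofReal ((Real.exp (-(L x)) * Real.exp (-(M x))) /
        ∫ x', Real.exp (-(L x')) * Real.exp (-(M x')) ∂p) := by
  have hZ2 : ∫ x, Real.exp (-(M x)) ∂(bayesUpdate p L) =
      (∫ x', Real.exp (-(L x')) * Real.exp (-(M x')) ∂p) / ∫ x, Real.exp (-(L x)) ∂p := by
    unfold bayesUpdate
    rw [integral_withDensity_eq_integral_toReal_smul (by fun_prop)
      (Filter.Eventually.of_forall fun x => ENNReal.ofReal_lt_top), ← integral_div]
    refine integral_congr_ae (Filter.Eventually.of_forall fun x => ?_)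
    simp only [smul_eq_mul]
    rw [ENNReal.toReal_ofReal (by positivity)]
    ring
  rw [bayesUpdate, hZ2]
  unfold bayesUpdate
  rw [← withDensity_mul _ (by fun_prop) (by fun_prop)]
  congr 1
  funext x
  simp only [Pi.mul_apply]
  rw [← ENNReal.ofReal_mul (by positivity)]
  congr 1
  generalize (∫ x', Real.exp (-(L x')) * Real.exp (-(M x')) ∂p) = W
  field_simp

theorem bayesUpdate_comm {d : ℕ} (p : Measure (EuclideanSpace ℝ (Fin d)))
    (L M : EuclideanSpace ℝ (Fin d) → ℝ)
    (hL : Measurable L) (hM : Measurable M) (hZ : 0 < ∫ x, Real.exp (-(L x)) ∂p)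
    (hZ' : 0 < ∫ x, Real.exp (-(M x)) ∂p) :
    bayesUpdate (bayesUpdate p L) M = bayesUpdate (bayesUpdate p M) L := by
  rw [bayesUpdate_bayesUpdate p L M hL hM hZ, bayesUpdate_bayesUpdate p M L hM hL hZ']
  simp only [mul_comm]

theorem list_split {α : Type*} (l : List α) (i : ℕ) (hi : i + 1 < l.length) :
    l = l.take i ++ l[i] :: l[i+1] :: l.drop (i + 2) := by
  conv_lhs => rw [← List.take_append_drop i l]
  rw [List.drop_eq_getElem_cons (by omega), List.drop_eq_getElem_cons hi]

/-- Swapping two adjacent losses in a sequence of `T ≥ 2` losses changes the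
particle-filter output by at most `2ε·C^{T−2}·(C² − 1)/(C − 1)`. (Losses are indexed
`0, …, T−1` here; the swapped pair is `L i, L (i+1)` with `i+1 < T`.) -/
theorem particleFilter_adjacent_swap
    {d : ℕ}
    -- discrepancy measure `D` on the space `Ω` of Borel probability measures on `ℝ^d`
    (D : Measure (EuclideanSpace ℝ (Fin d)) → Measure (EuclideanSpace ℝ (Fin d)) → ℝ)
    (hD_nonneg : ∀ p q, IsProbabilityMeasure p → IsProbabilityMeasure q → 0 ≤ D p q)
    (hD_symm : ∀ p q, IsProbabilityMeasure p → IsProbabilityMeasure q → D p q = D q p)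
    (hD_tri : ∀ p q r, IsProbabilityMeasure p → IsProbabilityMeasure q →
      IsProbabilityMeasure r → D p q ≤ D p r + D r q)
    (hD_refl : ∀ p, IsProbabilityMeasure p → D p p = 0)
    -- particle-filter update `U`, sending `phat ∈ Ω` and a loss `L` to `U phat L ∈ Ω`
    (U : Measure (EuclideanSpace ℝ (Fin d)) → (EuclideanSpace ℝ (Fin d) → ℝ) →
      Measure (EuclideanSpace ℝ (Fin d)))
    (hU_prob : ∀ p L, IsProbabilityMeasure p → Measurable L → (∀ x, 0 ≤ L x) →
      IsProbabilityMeasure (U p L))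
    -- constants
    (C ε : ℝ) (hC : 1 < C) (hε : 0 ≤ ε)
    -- assumption (6)
    (h6 : ∀ p q L, IsProbabilityMeasure p → IsProbabilityMeasure q → Measurable L →
      (∀ x, 0 ≤ L x) → D (U p L) (U q L) ≤ C * D p q)
    -- assumption (7)
    (h7 : ∀ phat p L, IsProbabilityMeasure phat → IsProbabilityMeasure p → Measurable L →
      (∀ x, 0 ≤ L x) → 0 < ∫ x, Real.exp (-(L x)) ∂p →
      D (U phat L) (bayesUpdate p L) ≤ C * D phat p + ε)
    -- a probability measure and `T ≥ 2` losses
    (phat : Measure (EuclideanSpace ℝ (Fin d))) (hphat : IsProbabilityMeasure phat)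
    {T : ℕ} (hT : 2 ≤ T)
    (L : Fin T → EuclideanSpace ℝ (Fin d) → ℝ)
    (hmeas : ∀ t, Measurable (L t)) (hnonneg : ∀ t x, 0 ≤ L t x)
    -- the relevant Bayes updates are well defined
    (hwd : ∀ t : Fin T, ∀ q : Measure (EuclideanSpace ℝ (Fin d)), IsProbabilityMeasure q →
      0 < ∫ x, Real.exp (-(L t x)) ∂q)
    -- the index of the swapped adjacent pair
    (i : ℕ) (hi : i + 1 < T) :
    D (List.foldl U phat (List.ofFn L))
        (List.foldl U phat
          (List.ofFn fun t =>
            L (Equiv.swap (⟨i, Nat.lt_of_succ_lt hi⟩ : Fin T) (⟨i + 1, hi⟩ : Fin T) t))) ≤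
      2 * ε * C ^ (T - 2) * (C ^ 2 - 1) / (C - 1) := by
  set a : Fin T := ⟨i, Nat.lt_of_succ_lt hi⟩ with ha
  set b : Fin T := ⟨i + 1, hi⟩ with hb
  set A := (List.ofFn L).take i with hA
  set B := (List.ofFn L).drop (i + 2) with hB
  have e1 : List.ofFn L = A ++ L a :: L b :: B := by
    have := list_split (List.ofFn L) i (by simpa using hi)
    simpa only [List.getElem_ofFn] using this
  have e2 : (List.ofFn fun t => L (Equiv.swap a b t)) = A ++ L b :: L a :: B := by
    have := list_split (List.ofFn fun t => L (Equiv.swap a b t)) i (by simpa using hi)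
    rw [this]
    congr 1
    · apply List.ext_getElem
      · simp [hA]
      · intro n h1 h2
        simp only [List.length_take, List.length_ofFn] at h1
        simp only [hA, List.getElem_take, List.getElem_ofFn]
        rw [Equiv.swap_apply_of_ne_of_ne] <;> simp [ha, hb, Fin.ext_iff] <;> omega
    · simp only [List.getElem_ofFn]
      rw [← ha, ← hb, Equiv.swap_apply_left, Equiv.swap_apply_right]
      congr 2
      apply List.ext_getElem
      · simp [hB]
      · intro n h1 h2
        simp only [hB, List.getElem_drop, List.getElem_ofFn]
        rw [Equiv.swap_apply_of_ne_of_ne] <;> simp [ha, hb, Fin.ext_iff] <;> omega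
  have hmemA : ∀ f ∈ A, Measurable f ∧ ∀ x, 0 ≤ f x := by
    intro f hf
    obtain ⟨t, rfl⟩ := (List.mem_ofFn' _ _).1 (List.mem_of_mem_take hf)
    exact ⟨hmeas t, hnonneg t⟩
  have hmemB : ∀ f ∈ B, Measurable f ∧ ∀ x, 0 ≤ f x := by
    intro f hf
    obtain ⟨t, rfl⟩ := (List.mem_ofFn' _ _).1 (List.mem_of_mem_drop hf)
    exact ⟨hmeas t, hnonneg t⟩
  have hBlen : B.length ≤ T - 2 := by
    simp [hB]; omega
  clear_value A B
  have hfold : ∀ (A : List (EuclideanSpace ℝ (Fin d) → ℝ)) p, IsProbabilityMeasure p →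
      (∀ f ∈ A, Measurable f ∧ ∀ x, 0 ≤ f x) → IsProbabilityMeasure (List.foldl U p A) := by
    intro A
    induction A with
    | nil => intro p hp _; exact hp
    | cons f A ih =>
      intro p hp h
      have hf := h f (by simp)
      exact ih _ (hU_prob p f hp hf.1 hf.2) fun g hg => h g (by simp [hg])
  have hlip : ∀ (A : List (EuclideanSpace ℝ (Fin d) → ℝ)) p q, IsProbabilityMeasure p →
      IsProbabilityMeasure q → (∀ f ∈ A, Measurable f ∧ ∀ x, 0 ≤ f x) →
      D (List.foldl U p A) (List.foldl U q A) ≤ C ^ A.length * D p q := by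
    intro A
    induction A with
    | nil => intro p q hp hq _; simp
    | cons f A ih =>
      intro p q hp hq h
      have hf := h f (by simp)
      have h1 := ih _ _ (hU_prob p f hp hf.1 hf.2) (hU_prob q f hq hf.1 hf.2)
        fun g hg => h g (by simp [hg])
      have h2 := h6 p q f hp hq hf.1 hf.2
      calc _ ≤ _ := h1
        _ ≤ C ^ A.length * (C * D p q) := by gcongr
        _ = _ := by rw [List.length_cons]; ring
  rw [e1, e2, List.foldl_append, List.foldl_append]
  simp only [List.foldl_cons]
  have hq := hfold A phat hphat hmemA
  generalize List.foldl U phat A = q at hq ⊢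
  have key : ∀ s t : Fin T, D (U (U q (L s)) (L t)) (bayesUpdate (bayesUpdate q (L s)) (L t))
      ≤ (C + 1) * ε := by
    intro s t
    have hp1 := bayesUpdate_prob q hq (L s) (hmeas s) (hnonneg s) (hwd s q hq)
    have h1 := h7 q q (L s) hq hq (hmeas s) (hnonneg s) (hwd s q hq)
    rw [hD_refl q hq] at h1
    have h2 := h7 (U q (L s)) _ (L t) (hU_prob _ _ hq (hmeas s) (hnonneg s)) hp1
      (hmeas t) (hnonneg t) (hwd t _ hp1)
    nlinarith
  have hP : ∀ s t : Fin T, IsProbabilityMeasure (U (U q (L s)) (L t)) := fun s t =>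
    hU_prob _ _ (hU_prob _ _ hq (hmeas s) (hnonneg s)) (hmeas t) (hnonneg t)
  have hp1 := bayesUpdate_prob q hq (L a) (hmeas a) (hnonneg a) (hwd a q hq)
  have hr := bayesUpdate_prob _ hp1 (L b) (hmeas b) (hnonneg b) (hwd b _ hp1)
  have k1 := key a b
  have k2 := key b a
  rw [bayesUpdate_comm q (L b) (L a) (hmeas b) (hmeas a) (hwd b q hq) (hwd a q hq),
    hD_symm _ _ (hP b a) hr] at k2
  have k3 := hD_tri _ _ _ (hP a b) (hP b a) hr
  have k4 : D (U (U q (L a)) (L b)) (U (U q (L b)) (L a)) ≤ 2 * (C + 1) * ε := by linarith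
  have hC1 : C - 1 ≠ 0 := by linarith
  calc _ ≤ _ := hlip B _ _ (hP a b) (hP b a) hmemB
    _ ≤ C ^ B.length * (2 * (C + 1) * ε) := by gcongr
    _ ≤ C ^ (T - 2) * (2 * (C + 1) * ε) := by
      gcongr
      exact hC.le
    _ = _ := by field_simp; ring
end

section
/- (Theorem 1) Let T ≥ 2, let σ be a permutation of {1, …, T} that can be written as a composition of N adjacent transpositions, let p̂₀ ∈ Ω, and let L₁, …, L_T be losses (with the relevant Bayes updates well defined). Then D(p̂₀[L₁, …, L_T], p̂₀[L_{σ(1)}, …, L_{σ(T)}]) ≤ 2Nε · C^{T−2} · (C² − 1)/(C − 1). -/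
open MeasureTheory

theorem pf_bayes_bayes {d : ℕ} (p : Measure (EuclideanSpace ℝ (Fin d)))
    (a b : EuclideanSpace ℝ (Fin d) → ℝ) (ha : Measurable a) (hb : Measurable b)
    (hpa : 0 < ∫ x, Real.exp (-(a x)) ∂p) :
    bayesUpdate (bayesUpdate p a) b = p.withDensity fun x =>
      ENNReal.ofReal (Real.exp (-(a x)) * Real.exp (-(b x)) /
        ∫ x', Real.exp (-(a x')) * Real.exp (-(b x')) ∂p) := by
  have hm : ∀ Z : ℝ, ∀ c : EuclideanSpace ℝ (Fin d) → ℝ, Measurable c →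
      Measurable fun x => ENNReal.ofReal (Real.exp (-(c x)) / Z) := by
    intro Z c hc
    fun_prop
  have hint : ∫ x, Real.exp (-(b x)) ∂(bayesUpdate p a) =
      (∫ x', Real.exp (-(a x')) * Real.exp (-(b x')) ∂p) / ∫ x, Real.exp (-(a x)) ∂p := by
    unfold bayesUpdate
    rw [integral_withDensity_eq_integral_toReal_smul (hm _ a ha)
      (Filter.Eventually.of_forall fun x => ENNReal.ofReal_lt_top), ← integral_div]
    congr 1
    ext x
    rw [ENNReal.toReal_ofReal (by positivity), smul_eq_mul]
    ring
  rw [bayesUpdate, hint, bayesUpdate, ← withDensity_mul _ (hm _ a ha) (hm _ b hb)]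
  congr 1
  ext x
  rw [Pi.mul_apply, ← ENNReal.ofReal_mul (by positivity)]
  congr 1
  generalize (∫ x, Real.exp (-(a x)) ∂p) = Z at *
  field_simp

theorem pf_bayes_comm {d : ℕ} (p : Measure (EuclideanSpace ℝ (Fin d)))
    (a b : EuclideanSpace ℝ (Fin d) → ℝ) (ha : Measurable a) (hb : Measurable b)
    (hpa : 0 < ∫ x, Real.exp (-(a x)) ∂p) (hpb : 0 < ∫ x, Real.exp (-(b x)) ∂p) :
    bayesUpdate (bayesUpdate p a) b = bayesUpdate (bayesUpdate p b) a := by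
  rw [pf_bayes_bayes p a b ha hb hpa, pf_bayes_bayes p b a hb ha hpb]
  simp only [mul_comm]

theorem pf_bayes_prob {d : ℕ} (p : Measure (EuclideanSpace ℝ (Fin d)))
    (a : EuclideanSpace ℝ (Fin d) → ℝ)
    (hpa : 0 < ∫ x, Real.exp (-(a x)) ∂p) : IsProbabilityMeasure (bayesUpdate p a) := by
  have hi : Integrable (fun x => Real.exp (-(a x))) p := by
    by_contra h
    rw [integral_undef h] at hpa
    exact lt_irrefl _ hpa
  constructor
  rw [bayesUpdate, withDensity_apply _ MeasurableSet.univ, Measure.restrict_univ,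
    ← ofReal_integral_eq_lintegral_ofReal (hi.div_const _)
      (Filter.Eventually.of_forall fun x => by positivity), integral_div, div_self hpa.ne']
  simp

theorem pf_ofFn_swap {α : Type*} {T : ℕ} (f : Fin T → α) (m : ℕ) (hm : m + 1 < T) :
    ∃ A B : List α, A.length + B.length = T - 2 ∧
      List.ofFn f = A ++ f ⟨m, Nat.lt_of_succ_lt hm⟩ :: f ⟨m + 1, hm⟩ :: B ∧
      (List.ofFn fun t => f (Equiv.swap (⟨m, Nat.lt_of_succ_lt hm⟩ : Fin T) ⟨m + 1, hm⟩ t)) =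
        A ++ f ⟨m + 1, hm⟩ :: f ⟨m, Nat.lt_of_succ_lt hm⟩ :: B := by
  refine ⟨(List.ofFn f).take m, (List.ofFn f).drop (m + 2), ?_, ?_, ?_⟩
  · simp; omega
  · apply List.ext_getElem
    · simp; omega
    · intro i h1 h2
      simp only [List.length_ofFn] at h1
      simp only [List.getElem_append, List.getElem_cons, List.getElem_ofFn, List.length_take,
        List.length_ofFn, List.getElem_take, List.getElem_drop]
      split_ifs <;> congr 2 <;> omega
  · apply List.ext_getElem
    · simp; omega
    · intro i h1 h2
      simp only [List.length_ofFn] at h1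
      simp only [List.getElem_append, List.getElem_cons, List.getElem_ofFn, List.length_take,
        List.length_ofFn, List.getElem_take, List.getElem_drop, Equiv.swap_apply_def,
        Fin.mk.injEq]
      split_ifs <;> first | omega | (congr 2 <;> omega)

/-- Theorem 1: if the permutation `σ` of the `T ≥ 2` loss indices can be written as a
composition of `N` adjacent transpositions, then
`D(p̂₀[L₁,…,L_T], p̂₀[L_{σ(1)},…,L_{σ(T)}]) ≤ 2Nε·C^{T−2}·(C² − 1)/(C − 1)`. -/
theorem particleFilter_permutation_invariance
    {d : ℕ}
    -- discrepancy measure `D` on the space `Ω` of Borel probability measures on `ℝ^d`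
    (D : Measure (EuclideanSpace ℝ (Fin d)) → Measure (EuclideanSpace ℝ (Fin d)) → ℝ)
    (hD_nonneg : ∀ p q, IsProbabilityMeasure p → IsProbabilityMeasure q → 0 ≤ D p q)
    (hD_symm : ∀ p q, IsProbabilityMeasure p → IsProbabilityMeasure q → D p q = D q p)
    (hD_tri : ∀ p q r, IsProbabilityMeasure p → IsProbabilityMeasure q →
      IsProbabilityMeasure r → D p q ≤ D p r + D r q)
    (hD_refl : ∀ p, IsProbabilityMeasure p → D p p = 0)
    -- particle-filter update `U`, sending `phat ∈ Ω` and a loss `L` to `U phat L ∈ Ω`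
    (U : Measure (EuclideanSpace ℝ (Fin d)) → (EuclideanSpace ℝ (Fin d) → ℝ) →
      Measure (EuclideanSpace ℝ (Fin d)))
    (hU_prob : ∀ p L, IsProbabilityMeasure p → Measurable L → (∀ x, 0 ≤ L x) →
      IsProbabilityMeasure (U p L))
    -- constants
    (C ε : ℝ) (hC : 1 < C) (hε : 0 ≤ ε)
    -- assumption (6)
    (h6 : ∀ p q L, IsProbabilityMeasure p → IsProbabilityMeasure q → Measurable L →
      (∀ x, 0 ≤ L x) → D (U p L) (U q L) ≤ C * D p q)
    -- assumption (7)
    (h7 : ∀ phat p L, IsProbabilityMeasure phat → IsProbabilityMeasure p → Measurable L →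
      (∀ x, 0 ≤ L x) → 0 < ∫ x, Real.exp (-(L x)) ∂p →
      D (U phat L) (bayesUpdate p L) ≤ C * D phat p + ε)
    -- a probability measure and `T ≥ 2` losses
    (phat₀ : Measure (EuclideanSpace ℝ (Fin d))) (hphat₀ : IsProbabilityMeasure phat₀)
    {T : ℕ} (hT : 2 ≤ T)
    (L : Fin T → EuclideanSpace ℝ (Fin d) → ℝ)
    (hmeas : ∀ t, Measurable (L t)) (hnonneg : ∀ t x, 0 ≤ L t x)
    -- the relevant Bayes updates are well defined
    (hwd : ∀ t : Fin T, ∀ q : Measure (EuclideanSpace ℝ (Fin d)), IsProbabilityMeasure q →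
      0 < ∫ x, Real.exp (-(L t x)) ∂q)
    -- `σ` is a composition of `N` adjacent transpositions
    (σ : Equiv.Perm (Fin T)) (N : ℕ)
    (hσ : ∃ l : List (Equiv.Perm (Fin T)), l.length = N ∧
      (∀ τ ∈ l, ∃ (m : ℕ) (hm : m + 1 < T),
        τ = Equiv.swap (⟨m, Nat.lt_of_succ_lt hm⟩ : Fin T) (⟨m + 1, hm⟩ : Fin T)) ∧
      σ = l.prod) :
    D (List.foldl U phat₀ (List.ofFn L))
        (List.foldl U phat₀ (List.ofFn fun t => L (σ t))) ≤
      2 * N * ε * C ^ (T - 2) * (C ^ 2 - 1) / (C - 1) := by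
  have key : ∀ p a b, IsProbabilityMeasure p → Measurable a → (∀ x, 0 ≤ a x) →
      Measurable b → (∀ x, 0 ≤ b x) →
      0 < ∫ x, Real.exp (-(a x)) ∂p → 0 < ∫ x, Real.exp (-(b x)) ∂(bayesUpdate p a) →
      D (U (U p a) b) (bayesUpdate (bayesUpdate p a) b) ≤ (C + 1) * ε := by
    intro p a b hp ha ha0 hb hb0 hpa hpb
    have h1 := h7 p p a hp hp ha ha0 hpa
    rw [hD_refl p hp] at h1
    have h2 := h7 (U p a) (bayesUpdate p a) b (hU_prob p a hp ha ha0) (pf_bayes_prob p a hpa)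
      hb hb0 hpb
    nlinarith
  have fold_prob : ∀ (l : List (EuclideanSpace ℝ (Fin d) → ℝ)) p, IsProbabilityMeasure p →
      (∀ a ∈ l, Measurable a ∧ ∀ x, 0 ≤ a x) → IsProbabilityMeasure (List.foldl U p l) := by
    intro l
    induction l with
    | nil => intro p hp _; exact hp
    | cons a l ih =>
      intro p hp h
      have ha := h a (by simp)
      exact ih _ (hU_prob p a hp ha.1 ha.2) fun c hc => h c (by simp [hc])
  have fold_lip : ∀ (l : List (EuclideanSpace ℝ (Fin d) → ℝ)) p q, IsProbabilityMeasure p →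
      IsProbabilityMeasure q → (∀ a ∈ l, Measurable a ∧ ∀ x, 0 ≤ a x) →
      D (List.foldl U p l) (List.foldl U q l) ≤ C ^ l.length * D p q := by
    intro l
    induction l with
    | nil => intro p q _ _ _; simp
    | cons a l ih =>
      intro p q hp hq h
      have ha := h a (by simp)
      have h1 := ih _ _ (hU_prob p a hp ha.1 ha.2) (hU_prob q a hq ha.1 ha.2)
        fun c hc => h c (by simp [hc])
      have h2 := mul_le_mul_of_nonneg_left (h6 p q a hp hq ha.1 ha.2)
        (by positivity : (0 : ℝ) ≤ C ^ l.length)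
      simp only [List.foldl_cons, List.length_cons, pow_succ]
      linarith
  obtain ⟨l, hl, hτ, rfl⟩ := hσ
  have hC1 : C - 1 ≠ 0 := by linarith
  have hR : 2 * N * ε * C ^ (T - 2) * (C ^ 2 - 1) / (C - 1) =
      N * (C ^ (T - 2) * (2 * ((C + 1) * ε))) := by
    field_simp
    ring
  rw [hR, ← hl]
  clear hR hl
  induction l generalizing L with
  | nil => simp [hD_refl _ (fold_prob (List.ofFn L) phat₀ hphat₀ (by
      intro a ha
      obtain ⟨t, rfl⟩ := (List.mem_ofFn' _ _).1 ha
      exact ⟨hmeas t, hnonneg t⟩))]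
  | cons τ l ih =>
    have hmem : ∀ s : Fin T → Fin T, ∀ a ∈ List.ofFn (fun t => L (s t)),
        Measurable a ∧ ∀ x, 0 ≤ a x := by
      intro s a ha
      obtain ⟨t, rfl⟩ := (List.mem_ofFn' _ _).1 ha
      exact ⟨hmeas _, hnonneg _⟩
    have h1 := ih (fun t => L (τ t)) (fun t => hmeas _) (fun t => hnonneg _)
      (fun t => hwd _) (fun τ' h => hτ τ' (by simp [h]))
    obtain ⟨m, hm, hτm⟩ := hτ τ (by simp)
    have h2 : D (List.foldl U phat₀ (List.ofFn L))
        (List.foldl U phat₀ (List.ofFn fun t => L (τ t))) ≤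
        C ^ (T - 2) * (2 * ((C + 1) * ε)) := by
      obtain ⟨A, B, hAB, e1, e2⟩ := pf_ofFn_swap L m hm
      have hmL := hmem id
      simp only [id] at hmL
      rw [e1] at hmL
      rw [hτm, e1, e2]
      simp only [List.foldl_append, List.foldl_cons]
      have hp := fold_prob A phat₀ hphat₀ fun a ha => hmL a (by simp [ha])
      generalize List.foldl U phat₀ A = p at hp ⊢
      generalize hi : (⟨m, Nat.lt_of_succ_lt hm⟩ : Fin T) = i
      generalize hj : (⟨m + 1, hm⟩ : Fin T) = j
      have pa := pf_bayes_prob p (L i) (hwd i p hp)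
      have pb := pf_bayes_prob p (L j) (hwd j p hp)
      have k1 := key p (L i) (L j) hp (hmeas i) (hnonneg i) (hmeas j) (hnonneg j) (hwd i p hp)
        (hwd j _ pa)
      have k2 := key p (L j) (L i) hp (hmeas j) (hnonneg j) (hmeas i) (hnonneg i) (hwd j p hp)
        (hwd i _ pb)
      rw [← pf_bayes_comm p _ _ (hmeas i) (hmeas j) (hwd i p hp) (hwd j p hp)] at k2
      have pab := pf_bayes_prob _ (L j) (hwd j _ pa)
      have uij := hU_prob _ _ (hU_prob p (L i) hp (hmeas i) (hnonneg i)) (hmeas j) (hnonneg j)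
      have uji := hU_prob _ _ (hU_prob p (L j) hp (hmeas j) (hnonneg j)) (hmeas i) (hnonneg i)
      rw [hD_symm _ _ uji pab] at k2
      have k3 := hD_tri _ _ _ uij uji pab
      have k4 := fold_lip B _ _ uij uji fun a ha => hmL a (by simp [ha])
      have k5 : C ^ B.length ≤ C ^ (T - 2) := pow_le_pow_right₀ hC.le (by omega)
      refine k4.trans (mul_le_mul k5 (by linarith) (hD_nonneg _ _ uij uji) (by positivity))
    have h3 := hD_tri _ _ _ (fold_prob _ phat₀ hphat₀ (hmem id))
      (fold_prob _ phat₀ hphat₀ (hmem fun t => (τ :: l).prod t))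
      (fold_prob _ phat₀ hphat₀ (hmem fun t => τ t))
    simp only [id, List.prod_cons, Equiv.Perm.mul_apply] at h3 ⊢
    rw [List.length_cons]
    push_cast
    linarith
end

section
/- Let x₀ ∈ ℝ^d, σ² > 0, and let L_t(x) = ⟪g_t, x⟫ + b_t (g_t ∈ ℝ^d, b_t ∈ ℝ) for t = 1, …, T be linear loss functions. Define the gradient-descent trajectory x_t = x_{t−1} − σ²·g_t. Then the accumulated trapezoidal loss sums along the trajectory satisfy ∑_{t=1}^T (L_t(x_{t−1}) + L_t(x_t)) = ∑_{t=1}^T (L_t(x₀) + L_t(x_T)); consequently the final particle weight w_T = exp(−(1/2)·∑_{t=1}^T (L_t(x_t) + L_t(x_{t−1}))) equals exp(−(1/2)·∑_{t=1}^T (L_t(x₀) + L_t(x_T))). -/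
open scoped RealInnerProductSpace

/-- For linear losses `L t x = ⟪g t, x⟫ + b t` and the gradient-descent trajectory
`x_{t+1} = x_t − σ²·g_t`, the accumulated trapezoidal loss sums along the trajectory
satisfy `∑_t (L_t(x_t) + L_t(x_{t+1})) = ∑_t (L_t(x_0) + L_t(x_T))`; consequently the
final particle weight `exp(−(1/2)·∑_t (L_t(x_{t+1}) + L_t(x_t)))` equals
`exp(−(1/2)·∑_t (L_t(x_0) + L_t(x_T)))`. (Steps are indexed `0, …, T−1` here.) -/
theorem gradient_particleFilter_trapezoid_sum
    {d : ℕ} (T : ℕ) (σ2 : ℝ) (hσ2 : 0 < σ2)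
    (g : ℕ → EuclideanSpace ℝ (Fin d)) (b : ℕ → ℝ)
    (L : ℕ → EuclideanSpace ℝ (Fin d) → ℝ)
    (hL : ∀ t x, L t x = ⟪g t, x⟫ + b t)
    (x : ℕ → EuclideanSpace ℝ (Fin d))
    (hx : ∀ t, x (t + 1) = x t - σ2 • g t) :
    (∑ t ∈ Finset.range T, (L t (x t) + L t (x (t + 1)))) =
      (∑ t ∈ Finset.range T, (L t (x 0) + L t (x T))) ∧
    Real.exp (-(1 / 2) * ∑ t ∈ Finset.range T, (L t (x (t + 1)) + L t (x t))) =
      Real.exp (-(1 / 2) * ∑ t ∈ Finset.range T, (L t (x 0) + L t (x T))) := by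
  have hS : ∀ n, x n = x 0 - σ2 • ∑ t ∈ Finset.range n, g t := by
    intro n
    induction n with
    | zero => simp
    | succ k ih =>
      rw [hx, ih, Finset.sum_range_succ, smul_add]
      simp only [sub_sub]
  have key : (∑ t ∈ Finset.range T, (L t (x t) + L t (x (t + 1)))) =
      (∑ t ∈ Finset.range T, (L t (x 0) + L t (x T))) := by
    induction T with
    | zero => simp
    | succ k ih =>
      have h1 : ∑ t ∈ Finset.range k, (L t (x 0) + L t (x (k + 1))) =
          ∑ t ∈ Finset.range k, (L t (x 0) + L t (x k))
            - σ2 * ⟪∑ t ∈ Finset.range k, g t, g k⟫ := by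
        rw [sum_inner, Finset.mul_sum, ← Finset.sum_sub_distrib]
        refine Finset.sum_congr rfl fun t _ => ?_
        rw [hL, hL, hL, hx, inner_sub_right, real_inner_smul_right]
        ring
      have h2 : L k (x k) = L k (x 0) - σ2 * ⟪∑ t ∈ Finset.range k, g t, g k⟫ := by
        rw [hL, hL, hS k, inner_sub_right, real_inner_smul_right, real_inner_comm (g k)]
        ring
      rw [Finset.sum_range_succ, Finset.sum_range_succ, ih, h1, h2]
      ring
  refine ⟨key, ?_⟩
  rw [← key]
  simp only [add_comm]
end

section
/- (Exact mixture update under a linear loss) Let L(x) = ⟪g, x⟫ + b be a linear function on ℝ^d, let σ > 0, and let μ₁, …, μ_N ∈ ℝ^d and w₁, …, w_N ≥ 0. Define μ_i' = μ_i − σ²·g and w_i' = w_i · exp(−(L(μ_i') + L(μ_i))/2). Then for every x ∈ ℝ^d, exp(−L(x)) · ∑_{i=1}^N w_i · exp(−‖x − μ_i‖²/(2σ²)) = ∑_{i=1}^N w_i' · exp(−‖x − μ_i'‖²/(2σ²)); that is, the Bayes reweighting e^{−L} of an isotropic Gaussian mixture by a linear loss is again an isotropic Gaussian mixture of the same variance,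 whose component means are the gradient-descent updates of the original means and whose component weights are multiplied by exp(−(L(μ_i') + L(μ_i))/2). -/
open scoped RealInnerProductSpace

/-- Exact mixture update under a linear loss: the Bayes reweighting by `e^{−L}`, for a
linear loss `L x = ⟪g, x⟫ + b`, of an isotropic Gaussian mixture of variance `σ²` is
again an isotropic Gaussian mixture of the same variance, whose component means are the
gradient-descent updates `μᵢ' = μᵢ − σ²·g` of the original means and whose component
weights are multiplied by `exp(−(L(μᵢ') + L(μᵢ))/2)`. -/
theorem gaussian_mixture_linear_bayes_update
    {d : ℕ} (g : EuclideanSpace ℝ (Fin d)) (b σ : ℝ) (hσ : 0 < σ)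
    (L : EuclideanSpace ℝ (Fin d) → ℝ) (hL : ∀ x, L x = ⟪g, x⟫ + b)
    {N : ℕ} (μ : Fin N → EuclideanSpace ℝ (Fin d)) (w : Fin N → ℝ)
    (hw : ∀ i, 0 ≤ w i)
    (μ' : Fin N → EuclideanSpace ℝ (Fin d)) (hμ' : ∀ i, μ' i = μ i - σ ^ 2 • g)
    (w' : Fin N → ℝ) (hw' : ∀ i, w' i = w i * Real.exp (-((L (μ' i) + L (μ i)) / 2))) :
    ∀ x : EuclideanSpace ℝ (Fin d),
      Real.exp (-(L x)) * ∑ i, w i * Real.exp (-(‖x - μ i‖ ^ 2 / (2 * σ ^ 2))) =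
        ∑ i, w' i * Real.exp (-(‖x - μ' i‖ ^ 2 / (2 * σ ^ 2))) := by
  intro x
  rw [Finset.mul_sum]
  refine Finset.sum_congr rfl fun i _ => ?_
  have h1 : x - μ' i = (x - μ i) + σ ^ 2 • g := by rw [hμ']; abel
  have h2 : ‖x - μ' i‖ ^ 2 = ‖x - μ i‖ ^ 2 + 2 * (σ ^ 2 * (⟪g, x⟫ - ⟪g, μ i⟫))
      + (σ ^ 2) ^ 2 * ‖g‖ ^ 2 := by
    rw [h1, norm_add_sq_real, inner_smul_right, real_inner_comm, inner_sub_right, norm_smul,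
      mul_pow, Real.norm_eq_abs, sq_abs]
  have h3 : L (μ' i) = ⟪g, μ i⟫ - σ ^ 2 * ‖g‖ ^ 2 + b := by
    rw [hL, hμ', inner_sub_right, inner_smul_right, real_inner_self_eq_norm_sq]
  rw [hw', mul_left_comm, ← Real.exp_add, mul_assoc, ← Real.exp_add, h2, h3, hL, hL]
  congr 2
  field_simp
  ring
end
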